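/- arXiv:math/0508064 — 4 statements merged into one kernel-verified Lean document; each statement's English description precedes it below -/
import Mathlib

section
/- Let b ≥ 2 and fix i with 1 ≤ i ≤ b−1. Let μ = (i₁, …, i_m) be a word (finite list) in the alphabet {1, …, b−1} with m ≥ 2, i₁ = i_m = i, and i_p < i for all p with 1 < p < m. Then there exists a word μ′ obtained from μ by finitely many elementary commutations such that either for some j with 1 ≤ j ≤ i the pair (j, j) occurs as a consecutive subword (infix) of μ′, or for some j with 2 ≤ j ≤ i the triple (j, j−1, j) occurs as a consecutive subword of μ′. -/
/-- An elementary commutation: replace `u ++ [p, q] ++ v` by `u ++ [q, p] ++ v`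
when `|p - q| > 1`. -/
def CommStep (w w' : List ℕ) : Prop :=
  ∃ (u v : List ℕ) (p q : ℕ), (p + 1 < q ∨ q + 1 < p) ∧
    w = u ++ [p, q] ++ v ∧ w' = u ++ [q, p] ++ v

/-!
Two consecutive occurrences of `i` that enclose only smaller letters can be treated by induction
on `i`. If `i - 1` does not occur between them, `i` commutes with everything in between and the two
occurrences of `i` become adjacent. If `i - 1` occurs exactly once, both occurrences of `i` can be
moved next to it. If it occurs at least twice, the first two occurrences of `i - 1` enclose only
smaller letters, and induction applies to them. Commutations permute the letters of a word, so
the bounds on `j` need not be carried through the induction.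
-/

theorem exists_eq_cons_append_singleton {α : Type*} {l : List α} {a b : α} (hl : 2 ≤ l.length)
    (hhead : l.head? = some a) (hlast : l.getLast? = some b) : ∃ w, l = a :: w ++ [b] := by
  obtain ⟨t, rfl⟩ := List.head?_eq_some_iff.mp hhead
  have ht : t ≠ [] := by rintro rfl; simp at hl
  rw [List.getLast?_cons_of_ne_nil ht] at hlast
  obtain ⟨w, rfl⟩ := List.getLast?_eq_some_iff.mp hlast
  exact ⟨w, rfl⟩

/-- Letters at distance greater than one, which an elementary commutation may exchange. -/
def Far (p q : ℕ) : Prop :=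
  p + 1 < q ∨ q + 1 < p

local infix:50 " ⇝ " => Relation.ReflTransGen CommStep

namespace CommStep

variable {w w' : List ℕ}

instance : Std.Symm CommStep where
  symm := by
    rintro _ _ ⟨u, v, p, q, hpq, rfl, rfl⟩
    exact ⟨u, v, q, p, hpq.symm, rfl, rfl⟩

theorem perm (h : CommStep w w') : w.Perm w' := by
  obtain ⟨u, v, p, q, -, rfl, rfl⟩ := h
  exact ((List.Perm.swap q p []).append_left u).append_right v

theorem append_append (u v : List ℕ) (h : CommStep w w') :
    CommStep (u ++ w ++ v) (u ++ w' ++ v) := by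
  obtain ⟨x, y, p, q, hpq, rfl, rfl⟩ := h
  exact ⟨u ++ x, y ++ v, p, q, hpq, by simp, by simp⟩

theorem reflTransGen_perm (h : w ⇝ w') : w.Perm w' := by
  induction h with
  | refl => exact .refl _
  | tail _ hstep ih => exact ih.trans hstep.perm

theorem reflTransGen_append_append (u v : List ℕ) (h : w ⇝ w') : u ++ w ++ v ⇝ u ++ w' ++ v :=
  h.lift (fun x => u ++ x ++ v) fun _ _ hstep => hstep.append_append u v

theorem reflTransGen_cons_append_singleton {i : ℕ} (hw : ∀ x ∈ w, Far i x) :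
    i :: w ⇝ w ++ [i] := by
  induction w with
  | nil => exact .refl
  | cons a w ih =>
    obtain ⟨ha, hw⟩ := List.forall_mem_cons.mp hw
    have swap_head : CommStep (i :: a :: w) (a :: i :: w) := ⟨[], w, i, a, ha, rfl, rfl⟩
    have move_tail : a :: i :: w ⇝ a :: w ++ [i] := by
      simpa using reflTransGen_append_append [a] [] (ih hw)
    exact .head swap_head move_tail

end CommStep

/-- A word is braid reducible if commutations bring it to a word containing a square `j j` or a
braid triple `(j + 1) j (j + 1)`. Writing the triple with `j + 1` avoids truncated subtraction. -/
def BraidReducible (w : List ℕ) : Prop :=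
  ∃ w', w ⇝ w' ∧ ((∃ j, [j, j] <:+: w') ∨ ∃ j, [j + 1, j, j + 1] <:+: w')

namespace BraidReducible

theorem of_infix {w w' : List ℕ} (hw : BraidReducible w) (h : w <:+: w') : BraidReducible w' := by
  obtain ⟨ν, hν, hpattern⟩ := hw
  obtain ⟨u, v, rfl⟩ := h
  have hinfix : ν <:+: u ++ ν ++ v := List.infix_append u ν v
  exact ⟨u ++ ν ++ v, CommStep.reflTransGen_append_append u v hν,
    hpattern.imp (fun ⟨j, hj⟩ => ⟨j, hj.trans hinfix⟩) (fun ⟨j, hj⟩ => ⟨j, hj.trans hinfix⟩)⟩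

theorem of_forall_far {i : ℕ} {w : List ℕ} (hw : ∀ x ∈ w, Far i x) :
    BraidReducible (i :: w ++ [i]) := by
  refine ⟨w ++ [i] ++ [i], ?_, .inl ⟨i, w, [], by simp⟩⟩
  simpa only [List.nil_append] using
    CommStep.reflTransGen_append_append [] [i] (CommStep.reflTransGen_cons_append_singleton hw)

theorem of_forall_far_left_right {k : ℕ} {x y : List ℕ}
    (hx : ∀ t ∈ x, Far (k + 1) t) (hy : ∀ t ∈ y, Far (k + 1) t) :
    BraidReducible ((k + 1) :: (x ++ k :: y) ++ [k + 1]) := by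
  have move_first : (k + 1) :: (x ++ k :: y) ++ [k + 1] ⇝ x ++ (k + 1) :: k :: y ++ [k + 1] := by
    simpa using CommStep.reflTransGen_append_append [] (k :: y ++ [k + 1])
      (CommStep.reflTransGen_cons_append_singleton hx)
  have move_last : x ++ (k + 1) :: k :: y ++ [k + 1] ⇝ x ++ [k + 1, k, k + 1] ++ y := by
    simpa using CommStep.reflTransGen_append_append (x ++ [k + 1, k]) []
      (symm (CommStep.reflTransGen_cons_append_singleton hy))
  exact ⟨_, move_first.trans move_last, .inr ⟨k, List.infix_append x _ y⟩⟩

theorem of_forall_lt (i : ℕ) (w : List ℕ) (hw : ∀ x ∈ w, x < i) :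
    BraidReducible (i :: w ++ [i]) := by
  induction i generalizing w with
  | zero => exact of_forall_far fun x hx => absurd (hw x hx) x.not_lt_zero
  | succ k ih =>
    have lt_of_notMem {l : List ℕ} (hl : l ⊆ w) (hk : k ∉ l) : ∀ x ∈ l, x < k := fun x hx =>
      (Nat.le_of_lt_succ (hw x (hl hx))).lt_of_ne (ne_of_mem_of_not_mem hx hk)
    have far_of_notMem {l : List ℕ} (hl : l ⊆ w) (hk : k ∉ l) :
        ∀ x ∈ l, Far (k + 1) x :=
      fun x hx => .inr (Nat.succ_lt_succ (lt_of_notMem hl hk x hx))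
    by_cases hkw : k ∈ w
    · obtain ⟨x, y, rfl, hkx⟩ := List.eq_append_cons_of_mem hkw
      by_cases hky : k ∈ y
      · obtain ⟨m, z, rfl, hkm⟩ := List.eq_append_cons_of_mem hky
        have hinner : BraidReducible (k :: m ++ [k]) :=
          ih m (lt_of_notMem (List.subset_append_of_subset_right x (by simp)) hkm)
        exact hinner.of_infix ⟨(k + 1) :: x, z ++ [k + 1], by simp⟩
      · exact of_forall_far_left_right (far_of_notMem (by simp) hkx) (far_of_notMem (by simp) hky)
    · exact of_forall_far (far_of_notMem (List.Subset.refl w) hkw)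

end BraidReducible

theorem braid_word_reduction (b i : ℕ) (hb : 2 ≤ b) (hi1 : 1 ≤ i) (hi2 : i ≤ b - 1)
    (μ : List ℕ) (hm : 2 ≤ μ.length)
    (hletters : ∀ x ∈ μ, 1 ≤ x ∧ x ≤ b - 1)
    (hhead : μ.head? = some i) (hlast : μ.getLast? = some i)
    (hint : ∀ (p : ℕ) (hp : p < μ.length), 0 < p → p + 1 < μ.length → μ.get ⟨p, hp⟩ < i) :
    ∃ μ' : List ℕ, Relation.ReflTransGen CommStep μ μ' ∧
      ((∃ j, 1 ≤ j ∧ j ≤ i ∧ [j, j] <:+: μ') ∨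
       (∃ j, 2 ≤ j ∧ j ≤ i ∧ [j, j - 1, j] <:+: μ')) := by
  obtain ⟨w, rfl⟩ := exists_eq_cons_append_singleton hm hhead hlast
  have hw : ∀ x ∈ w, x < i := by
    intro x hx
    obtain ⟨n, hn, rfl⟩ := List.getElem_of_mem hx
    simpa [List.getElem_append_left hn] using hint (n + 1) (by grind) n.succ_pos (by simpa)
  obtain ⟨μ', hμ', hpattern⟩ := BraidReducible.of_forall_lt i w hw
  have hbounds : ∀ j ∈ μ', 1 ≤ j ∧ j ≤ i := by
    intro j hj
    have hjμ : j ∈ i :: w ++ [i] := (CommStep.reflTransGen_perm hμ').mem_iff.mpr hj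
    have hjw : j = i ∨ j ∈ w := by simpa [or_comm, or_assoc] using hjμ
    exact ⟨(hletters j hjμ).1, hjw.elim le_of_eq fun h => (hw j h).le⟩
  refine ⟨μ', hμ', hpattern.imp ?_ ?_⟩
  · rintro ⟨j, hj⟩
    obtain ⟨hj1, hji⟩ := hbounds j (hj.subset (by simp))
    exact ⟨j, hj1, hji, hj⟩
  · rintro ⟨j, hj⟩
    obtain ⟨hj1, -⟩ := hbounds j (hj.subset (by simp))
    obtain ⟨-, hji⟩ := hbounds (j + 1) (hj.subset (by simp))
    exact ⟨j + 1, Nat.succ_le_succ hj1, hji, hj⟩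
end

section
/- Fix an integer n ≥ 2 and work in R = ℚ[x₁, x₂, x₃, x₄]. Set π₁₃ = Σ_{a+b=n, a,b≥0} x₁^a x₃^b and π₂₄ = Σ_{a+b=n, a,b≥0} x₂^a x₄^b, and define the 2×2 matrices over R: P₀ = [[π₁₃, x₂ − x₄], [π₂₄, −x₁ + x₃]] and P₁ = [[x₁ − x₃, x₂ − x₄], [π₂₄, −π₁₃]]. Then P₁·P₀ = P₀·P₁ = (x₁^{n+1} + x₂^{n+1} − x₃^{n+1} − x₄^{n+1})·I₂, where I₂ is the 2×2 identity matrix; i.e., the pair (P₀, P₁) is a matrix factorization of the potential x₁^{n+1} + x₂^{n+1} − x₃^{n+1} − x₄^{n+1}. -/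
/-!
`P₁` is the negative of the adjugate of `P₀`, so both products are `-det P₀` times the identity.
Here `-det P₀ = (x₁ - x₃) π₁₃ + (x₂ - x₄) π₂₄`, and each summand telescopes.
-/

open MvPolynomial

/-- The matrix factorizations `(A, B)` of a potential `w`: square matrices over a commutative ring
whose products in both orders are the scalar matrix `w`. -/
def IsMatrixFactorization {ι R : Type*} [Fintype ι] [DecidableEq ι] [CommRing R]
    (A B : Matrix ι ι R) (w : R) : Prop :=
  A * B = w • (1 : Matrix ι ι R) ∧ B * A = w • (1 : Matrix ι ι R)

theorem isMatrixFactorization_neg_adjugate {ι R : Type*} [Fintype ι] [DecidableEq ι] [CommRing R]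
    (A : Matrix ι ι R) : IsMatrixFactorization (-A.adjugate) A (-A.det) := by
  simp [IsMatrixFactorization, Matrix.adjugate_mul, Matrix.mul_adjugate]

theorem isMatrixFactorization_koszul {R : Type*} [CommRing R] (a₁ b₁ a₂ b₂ : R) :
    IsMatrixFactorization !![b₁, b₂; a₂, -a₁] !![a₁, b₂; a₂, -b₁] (b₁ * a₁ + b₂ * a₂) := by
  have adjugate_eq : -(!![a₁, b₂; a₂, -b₁]).adjugate = !![b₁, b₂; a₂, -a₁] := by
    simp [Matrix.adjugate_fin_two_of]
  have det_eq : -(!![a₁, b₂; a₂, -b₁]).det = b₁ * a₁ + b₂ * a₂ := by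
    rw [Matrix.det_fin_two_of]
    ring
  rw [← adjugate_eq, ← det_eq]
  exact isMatrixFactorization_neg_adjugate _

theorem sub_mul_sum_antidiagonal_pow_mul_pow {R : Type*} [Ring R] {x y : R} (h : Commute x y)
    (n : ℕ) :
    (x - y) * ∑ p ∈ Finset.HasAntidiagonal.antidiagonal n, x ^ p.1 * y ^ p.2 =
      x ^ (n + 1) - y ^ (n + 1) := by
  rw [Finset.Nat.sum_antidiagonal_eq_sum_range_succ fun i j ↦ x ^ i * y ^ j]
  exact h.mul_geom_sum₂ (n + 1)

theorem P_matrix_factorization_general {R : Type*} [CommRing R] (x₁ x₂ x₃ x₄ : R) (n : ℕ)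
    (π₁₃ π₂₄ : R)
    (h₁₃ : π₁₃ = ∑ p ∈ Finset.HasAntidiagonal.antidiagonal n, x₁ ^ p.1 * x₃ ^ p.2)
    (h₂₄ : π₂₄ = ∑ p ∈ Finset.HasAntidiagonal.antidiagonal n, x₂ ^ p.1 * x₄ ^ p.2) :
    IsMatrixFactorization !![x₁ - x₃, x₂ - x₄; π₂₄, -π₁₃] !![π₁₃, x₂ - x₄; π₂₄, -x₁ + x₃]
      (x₁ ^ (n + 1) + x₂ ^ (n + 1) - x₃ ^ (n + 1) - x₄ ^ (n + 1)) := by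
  have potential_eq : x₁ ^ (n + 1) + x₂ ^ (n + 1) - x₃ ^ (n + 1) - x₄ ^ (n + 1) =
      (x₁ - x₃) * π₁₃ + (x₂ - x₄) * π₂₄ := by
    rw [h₁₃, h₂₄, sub_mul_sum_antidiagonal_pow_mul_pow (.all x₁ x₃),
      sub_mul_sum_antidiagonal_pow_mul_pow (.all x₂ x₄)]
    ring
  rw [potential_eq, neg_add_eq_sub, ← neg_sub x₁ x₃]
  exact isMatrixFactorization_koszul π₁₃ (x₁ - x₃) π₂₄ (x₂ - x₄)

theorem P_matrix_factorization (n : ℕ) (hn : 2 ≤ n)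
    (π₁₃ π₂₄ : MvPolynomial (Fin 4) ℚ)
    (h₁₃ : π₁₃ = ∑ p ∈ Finset.HasAntidiagonal.antidiagonal n, X 0 ^ p.1 * X 2 ^ p.2)
    (h₂₄ : π₂₄ = ∑ p ∈ Finset.HasAntidiagonal.antidiagonal n, X 1 ^ p.1 * X 3 ^ p.2)
    (P₀ P₁ : Matrix (Fin 2) (Fin 2) (MvPolynomial (Fin 4) ℚ))
    (hP₀ : P₀ = !![π₁₃, X 1 - X 3; π₂₄, -X 0 + X 2])
    (hP₁ : P₁ = !![X 0 - X 2, X 1 - X 3; π₂₄, -π₁₃]) :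
    P₁ * P₀ = ((X 0 : MvPolynomial (Fin 4) ℚ) ^ (n + 1) + X 1 ^ (n + 1)
          - X 2 ^ (n + 1) - X 3 ^ (n + 1)) • (1 : Matrix (Fin 2) (Fin 2) (MvPolynomial (Fin 4) ℚ)) ∧
    P₀ * P₁ = ((X 0 : MvPolynomial (Fin 4) ℚ) ^ (n + 1) + X 1 ^ (n + 1)
          - X 2 ^ (n + 1) - X 3 ^ (n + 1)) • (1 : Matrix (Fin 2) (Fin 2) (MvPolynomial (Fin 4) ℚ)) := by
  subst hP₀ hP₁
  exact P_matrix_factorization_general (X 0) (X 1) (X 2) (X 3) n π₁₃ π₂₄ h₁₃ h₂₄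
end

section
/- Fix an integer n ≥ 2 and let g ∈ ℚ[s, e] be the unique two-variable polynomial with g(X + Y, X·Y) = X^{n+1} + Y^{n+1}. Let u₁, u₂ ∈ R = ℚ[x₁, x₂, x₃, x₄] satisfy u₁·(x₁ + x₂ − x₃ − x₄) = g(x₁ + x₂, x₁x₂) − g(x₃ + x₄, x₁x₂) and u₂·(x₁x₂ − x₃x₄) = g(x₃ + x₄, x₁x₂) − g(x₃ + x₄, x₃x₄), and set π₂₄ = Σ_{a+b=n, a,b≥0} x₂^a x₄^b. Then x₁ − x₃ divides u₁ + x₁u₂ − π₂₄ in R; in particular a₁ := −u₂ + (u₁ + x₁u₂ − π₂₄)/(x₁ − x₃) is a polynomial in R. -/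
open MvPolynomial

/-!
With `x₁, x₂, x₃, x₄` standing for `X i, X j, X k, X l`, multiply `u₁ + x₁ u₂ - π₂₄` by `x₂ - x₄`.
Modulo `x₁ - x₃` one has `x₂ - x₄ ≡ x₁ + x₂ - x₃ - x₄` and `x₁ (x₂ - x₄) ≡ x₁ x₂ - x₃ x₄`, so the
two defining equations add up to
`(u₁ + x₁ u₂) (x₂ - x₄) ≡ x₁ⁿ⁺¹ + x₂ⁿ⁺¹ - x₃ⁿ⁺¹ - x₄ⁿ⁺¹ ≡ x₂ⁿ⁺¹ - x₄ⁿ⁺¹ = π₂₄ (x₂ - x₄)`.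
The factor `x₂ - x₄` can be cancelled because it is a nonzerodivisor modulo `x₁ - x₃`.
-/

section CommRing

variable {A : Type*} [CommRing A]

lemma sum_antidiagonal_pow_mul_pow_mul_sub (a b : A) (n : ℕ) :
    (∑ p ∈ Finset.HasAntidiagonal.antidiagonal n, a ^ p.1 * b ^ p.2) * (a - b)
      = a ^ (n + 1) - b ^ (n + 1) := by
  rw [Finset.Nat.sum_antidiagonal_eq_sum_range_succ (fun i j ↦ a ^ i * b ^ j)]
  exact (Commute.all a b).geom_sum₂_mul (n + 1)

lemma sub_dvd_mul_sub_of_mul_eq_pow_add_pow_sub {a b c d m u v : A} {n : ℕ}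
    (hu : u * (a + b - c - d) = a ^ (n + 1) + b ^ (n + 1) - m)
    (hv : v * (a * b - c * d) = m - (c ^ (n + 1) + d ^ (n + 1))) :
    a - c ∣
      (u + a * v - ∑ p ∈ Finset.HasAntidiagonal.antidiagonal n, b ^ p.1 * d ^ p.2) * (b - d) := by
  have telescope :
      (u + a * v - ∑ p ∈ Finset.HasAntidiagonal.antidiagonal n, b ^ p.1 * d ^ p.2) * (b - d)
        = (a ^ (n + 1) - c ^ (n + 1)) - (u + v * d) * (a - c) := by
    linear_combination hu + hv - sum_antidiagonal_pow_mul_pow_mul_sub b d n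
  rw [telescope]
  exact dvd_sub (sub_dvd_pow_sub_pow a c (n + 1)) (dvd_mul_left _ _)

end CommRing

lemma aeval_sub_aeval_mem {σ K A : Type*} [CommSemiring K] [CommRing A] [Algebra K A]
    {I : Ideal A} {f g : σ → A} (hfg : ∀ i, f i - g i ∈ I) (p : MvPolynomial σ K) :
    aeval f p - aeval g p ∈ I := by
  rw [← Ideal.Quotient.eq, ← Ideal.Quotient.mkₐ_eq_mk K, comp_aeval_apply, comp_aeval_apply]
  congr 2
  exact funext fun i ↦ Ideal.Quotient.eq.2 (hfg i)

lemma aeval_add_mul_eq_aeval_aeval {K A : Type*} [CommSemiring K] [CommSemiring A] [Algebra K A]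
    (a b : A) (g : MvPolynomial (Fin 2) K) :
    aeval ![a + b, a * b] g
      = aeval ![a, b] (aeval ![(X 0 : MvPolynomial (Fin 2) K) + X 1, X 0 * X 1] g) := by
  rw [comp_aeval_apply]
  congr 2
  ext i
  fin_cases i <;> simp

section Variables

variable {σ K : Type*} [CommRing K]

lemma isRegular_X_sub_X {i j : σ} (hij : i ≠ j) :
    IsRegular (X i - X j : MvPolynomial σ K) := by
  classical
  let shear : MvPolynomial σ K →ₐ[K] MvPolynomial σ K := aeval (Function.update X i (X i + X j))
  let unshear : MvPolynomial σ K →ₐ[K] MvPolynomial σ K := aeval (Function.update X i (X i - X j))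
  have shear_X_sub_X : shear (X i - X j) = X i := by simp [shear, hij.symm]
  have unshear_comp_shear : unshear.comp shear = AlgHom.id K _ := by
    ext1 s
    obtain rfl | hs := eq_or_ne s i
    · simp [shear, unshear, hij.symm]
    · simp [shear, unshear, hs]
  have shear_injective : Function.Injective shear :=
    Function.LeftInverse.injective (g := unshear) (DFunLike.congr_fun unshear_comp_shear)
  refine isLeftRegular_iff_isRegular.1 fun p q hpq ↦
    shear_injective ((isRegular_X (n := i)).left ?_)
  simpa only [map_mul, shear_X_sub_X] using congrArg shear hpq

lemma X_sub_X_dvd_iff_rename_update_eq_zero [DecidableEq σ] {i k : σ} {p : MvPolynomial σ K} :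
    X i - X k ∣ p ↔ rename (Function.update id i k) p = 0 := by
  constructor
  · rintro ⟨q, rfl⟩
    obtain rfl | hik := eq_or_ne k i <;> simp [*]
  · intro hp
    have hmem : aeval X p - aeval (X ∘ Function.update id i k) p
        ∈ Ideal.span {(X i - X k : MvPolynomial σ K)} := by
      refine aeval_sub_aeval_mem (fun s ↦ ?_) p
      obtain rfl | hs := eq_or_ne s i
      · simp
      · simp [hs]
    rwa [← aeval_rename, hp, map_zero, sub_zero, aeval_X_left_apply,
      Ideal.mem_span_singleton] at hmem

lemma X_sub_X_dvd_of_dvd_mul_X_sub_X {i j k l : σ} (hij : i ≠ j) (hil : i ≠ l) (hjl : j ≠ l)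
    {p : MvPolynomial σ K} (h : X i - X k ∣ p * (X j - X l)) : X i - X k ∣ p := by
  classical
  rw [X_sub_X_dvd_iff_rename_update_eq_zero] at h ⊢
  refine (isRegular_X_sub_X hjl).right.mul_right_eq_zero_iff.1 ?_
  simpa [hij.symm, hil.symm] using h

theorem a1_is_polynomial_general {i j k l : σ} (hij : i ≠ j) (hil : i ≠ l) (hjl : j ≠ l) {n : ℕ}
    {g : MvPolynomial (Fin 2) K}
    (hg : aeval ![(X 0 : MvPolynomial (Fin 2) K) + X 1, X 0 * X 1] g
        = X 0 ^ (n + 1) + X 1 ^ (n + 1))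
    {u₁ u₂ : MvPolynomial σ K}
    (hu₁ : u₁ * (X i + X j - X k - X l)
        = aeval ![X i + X j, X i * X j] g - aeval ![X k + X l, X i * X j] g)
    (hu₂ : u₂ * (X i * X j - X k * X l)
        = aeval ![X k + X l, X i * X j] g - aeval ![X k + X l, X k * X l] g) :
    X i - X k ∣
      u₁ + X i * u₂ - ∑ p ∈ Finset.HasAntidiagonal.antidiagonal n, X j ^ p.1 * X l ^ p.2 := by
  have power_sum (a b : MvPolynomial σ K) :
      aeval ![a + b, a * b] g = a ^ (n + 1) + b ^ (n + 1) := by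
    rw [aeval_add_mul_eq_aeval_aeval, hg]
    simp
  rw [power_sum] at hu₁ hu₂
  exact X_sub_X_dvd_of_dvd_mul_X_sub_X hij hil hjl
    (sub_dvd_mul_sub_of_mul_eq_pow_add_pow_sub hu₁ hu₂)

end Variables

theorem a1_is_polynomial (n : ℕ) (hn : 2 ≤ n)
    (g : MvPolynomial (Fin 2) ℚ)
    (hg : aeval ![(X 0 : MvPolynomial (Fin 2) ℚ) + X 1, X 0 * X 1] g
        = (X 0 : MvPolynomial (Fin 2) ℚ) ^ (n + 1) + X 1 ^ (n + 1))
    (u₁ u₂ : MvPolynomial (Fin 4) ℚ)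
    (hu₁ : u₁ * (X 0 + X 1 - X 2 - X 3)
        = aeval ![(X 0 : MvPolynomial (Fin 4) ℚ) + X 1, X 0 * X 1] g
          - aeval ![(X 2 : MvPolynomial (Fin 4) ℚ) + X 3, X 0 * X 1] g)
    (hu₂ : u₂ * (X 0 * X 1 - X 2 * X 3)
        = aeval ![(X 2 : MvPolynomial (Fin 4) ℚ) + X 3, X 0 * X 1] g
          - aeval ![(X 2 : MvPolynomial (Fin 4) ℚ) + X 3, X 2 * X 3] g)
    (π₂₄ : MvPolynomial (Fin 4) ℚ)
    (h₂₄ : π₂₄ = ∑ p ∈ Finset.HasAntidiagonal.antidiagonal n, X 1 ^ p.1 * X 3 ^ p.2) :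
    (X 0 - X 2 : MvPolynomial (Fin 4) ℚ) ∣ (u₁ + X 0 * u₂ - π₂₄) := by
  subst h₂₄
  exact a1_is_polynomial_general (by decide) (by decide) (by decide) hg hu₁ hu₂
end

section
/- Let ℚ[x, y] be the polynomial ring in two variables over ℚ, and let A be the ℚ-subalgebra of ℚ[x, y] generated by the elementary symmetric polynomials s₁ = x + y and s₂ = x·y. Then ℚ[x, y] is a free A-module of rank two with basis {1, y}; i.e., every polynomial p ∈ ℚ[x, y] can be written uniquely as p = f + g·y with f, g ∈ A. -/
open MvPolynomial

/-! Every element of the algebra `A` generated by `x + y` and `x * y` is invariant under exchanging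
`x` and `y`. The elements `f + g * y` with `f`, `g` in `A` form a subalgebra containing `x` and `y`,
because `y ^ 2 = (x + y) * y - x * y`. For uniqueness, the exchange turns
`f + g * y = f' + g' * y` into `f + g * x = f' + g' * x`; the difference of the two is
`(g - g') * (y - x) = 0`, and `y - x` is not a zero divisor. -/

theorem algHom_apply_eq_self_of_mem_adjoin_add_mul {R B : Type*} [CommSemiring R] [CommSemiring B]
    [Algebra R B] {a b : B} {σ : B →ₐ[R] B} (ha : σ a = b) (hb : σ b = a)
    {f : B} (hf : f ∈ Algebra.adjoin R {a + b, a * b}) : σ f = f := by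
  have hgen : Set.EqOn σ (AlgHom.id R B) {a + b, a * b} := by
    rintro _ (rfl | rfl) <;> simp [ha, hb, add_comm, mul_comm]
  exact AlgHom.adjoin_le_equalizer σ (AlgHom.id R B) hgen hf

section CommAlgebra

variable {R B : Type*} [CommRing R] [CommRing B] [Algebra R B] {a b : B}

theorem exists_eq_add_mul_of_mem_adjoin_pair {S : Subalgebra R B} (hadd : a + b ∈ S)
    (hmul : a * b ∈ S) {p : B} (hp : p ∈ Algebra.adjoin R {a, b}) :
    ∃ f ∈ S, ∃ g ∈ S, p = f + g * b := by
  induction hp using Algebra.adjoin_induction with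
  | mem x hx =>
    rcases hx with rfl | rfl
    · exact ⟨x + b, hadd, -1, neg_mem (one_mem S), by ring⟩
    · exact ⟨0, zero_mem S, 1, one_mem S, by ring⟩
  | algebraMap r => exact ⟨algebraMap R B r, S.algebraMap_mem r, 0, zero_mem S, by ring⟩
  | add _ _ _ _ hp hq =>
    obtain ⟨f, hf, g, hg, rfl⟩ := hp
    obtain ⟨f', hf', g', hg', rfl⟩ := hq
    exact ⟨f + f', add_mem hf hf', g + g', add_mem hg hg', by ring⟩
  | mul _ _ _ _ hp hq =>
    obtain ⟨f, hf, g, hg, rfl⟩ := hp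
    obtain ⟨f', hf', g', hg', rfl⟩ := hq
    have hgg : g * g' ∈ S := mul_mem hg hg'
    exact ⟨f * f' - g * g' * (a * b), sub_mem (mul_mem hf hf') (mul_mem hgg hmul),
      f * g' + g * f' + g * g' * (a + b),
      add_mem (add_mem (mul_mem hf hg') (mul_mem hg hf')) (mul_mem hgg hadd), by ring⟩

theorem eq_and_eq_of_add_mul_eq_add_mul {σ : B →+* B} (hb : σ b = a)
    (hreg : b - a ∈ nonZeroDivisors B) {f g f' g' : B} (hf : σ f = f) (hg : σ g = g)
    (hf' : σ f' = f') (hg' : σ g' = g') (h : f + g * b = f' + g' * b) : f = f' ∧ g = g' := by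
  have hσ : f + g * a = f' + g' * a := by
    simpa only [map_add, map_mul, hf, hg, hf', hg', hb] using congrArg σ h
  have hgg : g = g' := (mul_cancel_right_mem_nonZeroDivisors hreg).mp (by linear_combination h - hσ)
  subst hgg
  exact ⟨add_right_cancel h, rfl⟩

theorem existsUnique_eq_add_mul_of_mem_adjoin_pair {σ : B →ₐ[R] B} (ha : σ a = b) (hb : σ b = a)
    (hreg : b - a ∈ nonZeroDivisors B) {p : B} (hp : p ∈ Algebra.adjoin R {a, b}) :
    ∃! fg : Algebra.adjoin R {a + b, a * b} × Algebra.adjoin R {a + b, a * b},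
      p = (fg.1 : B) + (fg.2 : B) * b := by
  have hfix (s : Algebra.adjoin R {a + b, a * b}) : σ s = s :=
    algHom_apply_eq_self_of_mem_adjoin_add_mul ha hb s.2
  obtain ⟨f, hf, g, hg, hfg⟩ := exists_eq_add_mul_of_mem_adjoin_pair
    (S := Algebra.adjoin R {a + b, a * b})
    (Algebra.subset_adjoin (by simp)) (Algebra.subset_adjoin (by simp)) hp
  refine ⟨(⟨f, hf⟩, ⟨g, hg⟩), hfg, fun fg' hfg' ↦ ?_⟩
  obtain ⟨h₁, h₂⟩ := eq_and_eq_of_add_mul_eq_add_mul (σ := (σ : B →+* B)) hb hreg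
    (hfix fg'.1) (hfix fg'.2) (hfix ⟨f, hf⟩) (hfix ⟨g, hg⟩) (hfg'.symm.trans hfg)
  exact Prod.ext (Subtype.ext h₁) (Subtype.ext h₂)

end CommAlgebra

section PolynomialRing

variable {R : Type*} [CommRing R]

theorem X_sub_X_mem_nonZeroDivisors {ι : Type*} {i j : ι} (hij : i ≠ j) :
    X i - X j ∈ nonZeroDivisors (MvPolynomial ι R) := by
  classical
  let shift (q : MvPolynomial ι R) : MvPolynomial ι R →ₐ[R] MvPolynomial ι R :=
    aeval (Function.update X i (X i + q))
  have hcomp : (shift (-X j)).comp (shift (X j)) = AlgHom.id R _ := by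
    ext k : 1
    by_cases hk : k = i <;> simp [shift, hk, hij.symm]
  have hinv : Function.LeftInverse (shift (-X j)) (shift (X j)) := DFunLike.congr_fun hcomp
  have hX : shift (X j) (X i - X j) = X i := by simp [shift, hij.symm]
  refine mem_nonZeroDivisors_of_injective hinv.injective ?_
  rw [hX]
  exact isRegular_X.mem_nonZeroDivisors

theorem adjoin_X_zero_X_one :
    Algebra.adjoin R {(X 0 : MvPolynomial (Fin 2) R), X 1} = ⊤ := by
  rw [← adjoin_range_X]
  congr 1
  ext q
  simp [Fin.exists_fin_two, eq_comm]

theorem free_of_rank_two_over_symmetric_general (p : MvPolynomial (Fin 2) R) :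
    ∃! fg : Algebra.adjoin R {(X 0 : MvPolynomial (Fin 2) R) + X 1, X 0 * X 1} ×
        Algebra.adjoin R {(X 0 : MvPolynomial (Fin 2) R) + X 1, X 0 * X 1},
      p = (fg.1 : MvPolynomial (Fin 2) R) + (fg.2 : MvPolynomial (Fin 2) R) * X 1 :=
  existsUnique_eq_add_mul_of_mem_adjoin_pair (σ := rename (Equiv.swap 0 1))
    (by simp) (by simp) (X_sub_X_mem_nonZeroDivisors one_ne_zero)
    (adjoin_X_zero_X_one.ge Algebra.mem_top)

end PolynomialRing

theorem free_of_rank_two_over_symmetric (p : MvPolynomial (Fin 2) ℚ) :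
    ∃! fg : Algebra.adjoin ℚ {(X 0 : MvPolynomial (Fin 2) ℚ) + X 1, X 0 * X 1} ×
        Algebra.adjoin ℚ {(X 0 : MvPolynomial (Fin 2) ℚ) + X 1, X 0 * X 1},
      p = (fg.1 : MvPolynomial (Fin 2) ℚ) + (fg.2 : MvPolynomial (Fin 2) ℚ) * X 1 :=
  free_of_rank_two_over_symmetric_general p
end
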